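/- Coeffect soundness for CBPV: let Γ be a context and ρ an environment mapping every variable in the domain of Γ to a closed value of the expected type (i.e., Γ ⊨ ρ in the coeffect logical relation). Then (1) if γ·Γ ⊢ V : A, then γ·ρ ⊢ V ⇓ W for some closed value W; (2) if γ·Γ ⊢ M : B, then γ·ρ ⊢ M ⇓ T for some closed terminal computation T. -/

import Mathlib

set_option autoImplicit false

/-- A preordered semiring of grades `(Q, +, 0, ·, 1, ≤co)`,
where `≤co` is a preorder respected by `+` and `·`. -/
structure CoSig (Q : Type) where
  add : Q → Q → Q
  zero : Q
  mul : Q → Q → Q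
  one : Q
  le : Q → Q → Prop
  add_assoc : ∀ a b c, add (add a b) c = add a (add b c)
  add_comm : ∀ a b, add a b = add b a
  add_zero : ∀ a, add a zero = a
  mul_assoc : ∀ a b c, mul (mul a b) c = mul a (mul b c)
  one_mul : ∀ a, mul one a = a
  mul_one : ∀ a, mul a one = a
  zero_mul : ∀ a, mul zero a = zero
  mul_zero : ∀ a, mul a zero = zero
  left_distrib : ∀ a b c, mul a (add b c) = add (mul a b) (mul a c)
  right_distrib : ∀ a b c, mul (add a b) c = add (mul a c) (mul b c)
  le_refl : ∀ a, le a a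
  le_trans : ∀ a b c, le a b → le b c → le a c
  add_le_add : ∀ a b c d, le a b → le c d → le (add a c) (add b d)
  mul_le_mul : ∀ a b c d, le a b → le c d → le (mul a c) (mul b d)

namespace CBPVCo

/-- Pointwise comparison of grade vectors: `γ₁ ≤co γ₂`. -/
def vle {Q : Type} (S : CoSig Q) (γ₁ γ₂ : List Q) : Prop := List.Forall₂ S.le γ₁ γ₂

/-- Pointwise addition of grade vectors. -/
def vadd {Q : Type} (S : CoSig Q) (γ₁ γ₂ : List Q) : List Q := List.zipWith S.add γ₁ γ₂

/-- Pointwise scaling of a grade vector: `q·γ`. -/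
def vscale {Q : Type} (S : CoSig Q) (q : Q) (γ : List Q) : List Q := γ.map (S.mul q)

/-- `γ ≤co 0̄`: every entry of the grade vector is discardable. -/
def leZero {Q : Type} (S : CoSig Q) (γ : List Q) : Prop := ∀ q ∈ γ, S.le q S.zero

mutual
/-- CBPV value types (coeffect version): `unit`, thunks `U B`, positive products. -/
inductive VTy (Q : Type) : Type where
  | unit : VTy Q
  | thunk : CTy Q → VTy Q
  | prod : VTy Q → VTy Q → VTy Q
/-- CBPV computation types (coeffect version): graded functions `A^q → B`,
graded returners `F_q A`, negative products. -/
inductive CTy (Q : Type) : Type where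
  | arr : VTy Q → Q → CTy Q → CTy Q
  | F : Q → VTy Q → CTy Q
  | wth : CTy Q → CTy Q → CTy Q
end

mutual
/-- CBPV values (de Bruijn indices for variables). -/
inductive Val (Q : Type) : Type where
  | var : Nat → Val Q
  | unit : Val Q
  | thunk : Comp Q → Val Q
  | pair : Val Q → Val Q → Val Q
/-- CBPV computations, with grade annotations on binders and on `return`. -/
inductive Comp (Q : Type) : Type where
  | lam : Q → Comp Q → Comp Q
  | app : Comp Q → Val Q → Comp Q
  | force : Val Q → Comp Q
  | split : Q → Val Q → Comp Q → Comp Q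
  | cpair : Comp Q → Comp Q → Comp Q
  | fst : Comp Q → Comp Q
  | snd : Comp Q → Comp Q
  | ret : Q → Val Q → Comp Q
  | letin : Q → Comp Q → Comp Q → Comp Q
end

mutual
/-- The value typing judgment `γ·Γ ⊢ V : A` of the CBPV type-and-coeffect system. -/
inductive VHasTy {Q : Type} (S : CoSig Q) : List Q → List (VTy Q) → Val Q → VTy Q → Prop where
  | var : ∀ {γ : List Q} {Γ : List (VTy Q)} {x : Nat} {q : Q} {A : VTy Q},
      γ.length = Γ.length → Γ[x]? = some A → γ[x]? = some q → S.le q S.one →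
      (∀ (i : Nat) (q' : Q), i ≠ x → γ[i]? = some q' → S.le q' S.zero) →
      VHasTy S γ Γ (.var x) A
  | unit : ∀ {γ : List Q} {Γ : List (VTy Q)},
      γ.length = Γ.length → leZero S γ → VHasTy S γ Γ .unit .unit
  | thunk : ∀ {γ : List Q} {Γ : List (VTy Q)} {M : Comp Q} {B : CTy Q},
      CHasTy S γ Γ M B → VHasTy S γ Γ (.thunk M) (.thunk B)
  | pair : ∀ {γ γ₁ γ₂ : List Q} {Γ : List (VTy Q)} {V₁ V₂ : Val Q} {A₁ A₂ : VTy Q},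
      VHasTy S γ₁ Γ V₁ A₁ → VHasTy S γ₂ Γ V₂ A₂ → vle S γ (vadd S γ₁ γ₂) →
      VHasTy S γ Γ (.pair V₁ V₂) (.prod A₁ A₂)

/-- The computation typing judgment `γ·Γ ⊢ M : B` of the CBPV type-and-coeffect system. -/
inductive CHasTy {Q : Type} (S : CoSig Q) : List Q → List (VTy Q) → Comp Q → CTy Q → Prop where
  | lam : ∀ {γ : List Q} {Γ : List (VTy Q)} {q : Q} {A : VTy Q} {M : Comp Q} {B : CTy Q},
      CHasTy S (q :: γ) (A :: Γ) M B → CHasTy S γ Γ (.lam q M) (.arr A q B)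
  | app : ∀ {γ γ₁ γ₂ : List Q} {Γ : List (VTy Q)} {M : Comp Q} {V : Val Q}
      {A : VTy Q} {q : Q} {B : CTy Q},
      CHasTy S γ₁ Γ M (.arr A q B) → VHasTy S γ₂ Γ V A →
      vle S γ (vadd S γ₁ (vscale S q γ₂)) → CHasTy S γ Γ (.app M V) B
  | force : ∀ {γ : List Q} {Γ : List (VTy Q)} {V : Val Q} {B : CTy Q},
      VHasTy S γ Γ V (.thunk B) → CHasTy S γ Γ (.force V) B
  | ret : ∀ {γ γ₁ : List Q} {Γ : List (VTy Q)} {q : Q} {V : Val Q} {A : VTy Q},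
      VHasTy S γ₁ Γ V A → vle S γ (vscale S q γ₁) → CHasTy S γ Γ (.ret q V) (.F q A)
  | letin : ∀ {γ γ₁ γ₂ : List Q} {Γ : List (VTy Q)} {q₁ q₂ : Q} {M N : Comp Q}
      {A : VTy Q} {B : CTy Q},
      CHasTy S γ₁ Γ M (.F q₁ A) → CHasTy S (S.mul q₁ q₂ :: γ₂) (A :: Γ) N B →
      vle S γ (vadd S (vscale S q₂ γ₁) γ₂) → CHasTy S γ Γ (.letin q₂ M N) B
  | split : ∀ {γ γ₁ γ₂ : List Q} {Γ : List (VTy Q)} {q : Q} {V : Val Q}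
      {A₁ A₂ : VTy Q} {N : Comp Q} {B : CTy Q},
      VHasTy S γ₁ Γ V (.prod A₁ A₂) → CHasTy S (q :: q :: γ₂) (A₂ :: A₁ :: Γ) N B →
      vle S γ (vadd S (vscale S q γ₁) γ₂) → CHasTy S γ Γ (.split q V N) B
  | cpair : ∀ {γ : List Q} {Γ : List (VTy Q)} {M₁ M₂ : Comp Q} {B₁ B₂ : CTy Q},
      CHasTy S γ Γ M₁ B₁ → CHasTy S γ Γ M₂ B₂ → CHasTy S γ Γ (.cpair M₁ M₂) (.wth B₁ B₂)
  | fst : ∀ {γ : List Q} {Γ : List (VTy Q)} {M : Comp Q} {B₁ B₂ : CTy Q},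
      CHasTy S γ Γ M (.wth B₁ B₂) → CHasTy S γ Γ (.fst M) B₁
  | snd : ∀ {γ : List Q} {Γ : List (VTy Q)} {M : Comp Q} {B₁ B₂ : CTy Q},
      CHasTy S γ Γ M (.wth B₁ B₂) → CHasTy S γ Γ (.snd M) B₂
end

/-- Closed values: closures (capturing a grade vector and an environment),
unit, and pairs of closed values. -/
inductive CloVal (Q : Type) : Type where
  | clo : List Q → List (CloVal Q) → Comp Q → CloVal Q
  | unit : CloVal Q
  | pair : CloVal Q → CloVal Q → CloVal Q

/-- Closed terminal computations. -/
inductive Terminal (Q : Type) : Type where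
  | ret : Q → CloVal Q → Terminal Q
  | lamClo : List Q → List (CloVal Q) → Q → Comp Q → Terminal Q
  | cpairClo : List Q → List (CloVal Q) → Comp Q → Comp Q → Terminal Q

/-- The coeffect-instrumented value judgment `γ·ρ ⊢ V ⇓ W`. -/
inductive EvalVal {Q : Type} (S : CoSig Q) :
    List Q → List (CloVal Q) → Val Q → CloVal Q → Prop where
  | var : ∀ {γ : List Q} {ρ : List (CloVal Q)} {x : Nat} {q : Q} {W : CloVal Q},
      γ.length = ρ.length → ρ[x]? = some W → γ[x]? = some q → S.le q S.one →
      (∀ (i : Nat) (q' : Q), i ≠ x → γ[i]? = some q' → S.le q' S.zero) →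
      EvalVal S γ ρ (.var x) W
  | unit : ∀ {γ : List Q} {ρ : List (CloVal Q)},
      γ.length = ρ.length → leZero S γ → EvalVal S γ ρ .unit .unit
  | thunk : ∀ {γ γ' : List Q} {ρ : List (CloVal Q)} {M : Comp Q},
      vle S γ γ' → EvalVal S γ ρ (.thunk M) (.clo γ' ρ M)
  | pair : ∀ {γ γ₁ γ₂ : List Q} {ρ : List (CloVal Q)} {V₁ V₂ : Val Q} {W₁ W₂ : CloVal Q},
      EvalVal S γ₁ ρ V₁ W₁ → EvalVal S γ₂ ρ V₂ W₂ → vle S γ (vadd S γ₁ γ₂) →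
      EvalVal S γ ρ (.pair V₁ V₂) (.pair W₁ W₂)

/-- The coeffect-instrumented big-step judgment `γ·ρ ⊢ M ⇓ T`. -/
inductive EvalComp {Q : Type} (S : CoSig Q) :
    List Q → List (CloVal Q) → Comp Q → Terminal Q → Prop where
  | lam : ∀ {γ γ' : List Q} {ρ : List (CloVal Q)} {q : Q} {M : Comp Q},
      vle S γ γ' → EvalComp S γ ρ (.lam q M) (.lamClo γ' ρ q M)
  | cpair : ∀ {γ γ' : List Q} {ρ : List (CloVal Q)} {M₁ M₂ : Comp Q},
      vle S γ γ' → EvalComp S γ ρ (.cpair M₁ M₂) (.cpairClo γ' ρ M₁ M₂)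
  | ret : ∀ {γ γ₁ : List Q} {ρ : List (CloVal Q)} {q : Q} {V : Val Q} {W : CloVal Q},
      EvalVal S γ₁ ρ V W → vle S γ (vscale S q γ₁) →
      EvalComp S γ ρ (.ret q V) (.ret q W)
  | app : ∀ {γ γ₁ γ₂ γ' : List Q} {ρ ρ' : List (CloVal Q)} {M M' : Comp Q}
      {V : Val Q} {W : CloVal Q} {q : Q} {T : Terminal Q},
      EvalComp S γ₁ ρ M (.lamClo γ' ρ' q M') → EvalVal S γ₂ ρ V W →
      EvalComp S (q :: γ') (W :: ρ') M' T → vle S γ (vadd S γ₁ (vscale S q γ₂)) →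
      EvalComp S γ ρ (.app M V) T
  | force : ∀ {γ γ' : List Q} {ρ ρ' : List (CloVal Q)} {V : Val Q} {M : Comp Q} {T : Terminal Q},
      EvalVal S γ ρ V (.clo γ' ρ' M) → EvalComp S γ' ρ' M T → EvalComp S γ ρ (.force V) T
  | letin : ∀ {γ γ₁ γ₂ : List Q} {ρ : List (CloVal Q)} {q₁ q₂ : Q} {M N : Comp Q}
      {W : CloVal Q} {T : Terminal Q},
      EvalComp S γ₁ ρ M (.ret q₁ W) → EvalComp S (S.mul q₁ q₂ :: γ₂) (W :: ρ) N T →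
      vle S γ (vadd S (vscale S q₂ γ₁) γ₂) → EvalComp S γ ρ (.letin q₂ M N) T
  | split : ∀ {γ γ₁ γ₂ : List Q} {ρ : List (CloVal Q)} {q : Q} {V : Val Q}
      {W₁ W₂ : CloVal Q} {N : Comp Q} {T : Terminal Q},
      EvalVal S γ₁ ρ V (.pair W₁ W₂) → EvalComp S (q :: q :: γ₂) (W₂ :: W₁ :: ρ) N T →
      vle S γ (vadd S (vscale S q γ₁) γ₂) → EvalComp S γ ρ (.split q V N) T
  | fst : ∀ {γ γ' : List Q} {ρ ρ' : List (CloVal Q)} {M M₁ M₂ : Comp Q} {T : Terminal Q},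
      EvalComp S γ ρ M (.cpairClo γ' ρ' M₁ M₂) → EvalComp S γ' ρ' M₁ T →
      EvalComp S γ ρ (.fst M) T
  | snd : ∀ {γ γ' : List Q} {ρ ρ' : List (CloVal Q)} {M M₁ M₂ : Comp Q} {T : Terminal Q},
      EvalComp S γ ρ M (.cpairClo γ' ρ' M₁ M₂) → EvalComp S γ' ρ' M₂ T →
      EvalComp S γ ρ (.snd M) T

mutual
/-- The logical relation on closed values: `W ∈ 𝒲⟦A⟧`. -/
def WRel {Q : Type} (S : CoSig Q) : VTy Q → CloVal Q → Prop
  | .unit, W => W = CloVal.unit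
  | .thunk B, W => ∃ (γ : List Q) (ρ : List (CloVal Q)) (M : Comp Q),
      W = CloVal.clo γ ρ M ∧ ∃ (T : Terminal Q), EvalComp S γ ρ M T ∧ TRel S B T
  | .prod A₁ A₂, W => ∃ (W₁ W₂ : CloVal Q), W = CloVal.pair W₁ W₂ ∧
      WRel S A₁ W₁ ∧ WRel S A₂ W₂

/-- The logical relation on closed terminals: `T ∈ 𝒯⟦B⟧`. -/
def TRel {Q : Type} (S : CoSig Q) : CTy Q → Terminal Q → Prop
  | .F q A, T => ∃ (W : CloVal Q), T = Terminal.ret q W ∧ WRel S A W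
  | .arr A q B, T => ∃ (γ : List Q) (ρ : List (CloVal Q)) (M : Comp Q),
      T = Terminal.lamClo γ ρ q M ∧
      ∀ (W : CloVal Q), WRel S A W →
        ∃ (T' : Terminal Q), EvalComp S (q :: γ) (W :: ρ) M T' ∧ TRel S B T'
  | .wth B₁ B₂, T => ∃ (γ : List Q) (ρ : List (CloVal Q)) (M₁ M₂ : Comp Q),
      T = Terminal.cpairClo γ ρ M₁ M₂ ∧
      (∃ (T' : Terminal Q), EvalComp S γ ρ M₁ T' ∧ TRel S B₁ T') ∧
      (∃ (T' : Terminal Q), EvalComp S γ ρ M₂ T' ∧ TRel S B₂ T')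
end

/-- The logical relation on computations with graded environments: `(γ·ρ, M) ∈ ℳ⟦B⟧`. -/
def MRel {Q : Type} (S : CoSig Q) (B : CTy Q) (γ : List Q) (ρ : List (CloVal Q))
    (M : Comp Q) : Prop :=
  ∃ (T : Terminal Q), EvalComp S γ ρ M T ∧ TRel S B T

/-- The logical relation on values with graded environments: `(γ·ρ, V) ∈ 𝒱⟦A⟧`. -/
def VRel {Q : Type} (S : CoSig Q) (A : VTy Q) (γ : List Q) (ρ : List (CloVal Q))
    (V : Val Q) : Prop :=
  ∃ (W : CloVal Q), EvalVal S γ ρ V W ∧ WRel S A W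

/-- Semantic typing of environments: `Γ ⊨ ρ` — the environment maps every
variable in the domain of `Γ` to a closed value of the expected type. -/
def EnvOk {Q : Type} (S : CoSig Q) (Γ : List (VTy Q)) (ρ : List (CloVal Q)) : Prop :=
  Γ.length = ρ.length ∧
  ∀ (x : Nat) (A : VTy Q), Γ[x]? = some A →
    ∃ (W : CloVal Q), ρ[x]? = some W ∧ WRel S A W

/-- Semantic typing of values: `γ·Γ ⊨ V : A`. -/
def VSem {Q : Type} (S : CoSig Q) (γ : List Q) (Γ : List (VTy Q)) (V : Val Q)
    (A : VTy Q) : Prop :=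
  ∀ (ρ : List (CloVal Q)), EnvOk S Γ ρ → VRel S A γ ρ V

/-- Semantic typing of computations: `γ·Γ ⊨ M : B`. -/
def CSem {Q : Type} (S : CoSig Q) (γ : List Q) (Γ : List (VTy Q)) (M : Comp Q)
    (B : CTy Q) : Prop :=
  ∀ (ρ : List (CloVal Q)), EnvOk S Γ ρ → MRel S B γ ρ M

/-!
Evaluation alone is too weak an induction hypothesis: knowing that `M` and `V` evaluate says
nothing about `M V`. So one proves that `γ·Γ ⊢ M : B` implies `γ·Γ ⊨ M : B`, by showing that
semantic typing is closed under every typing rule. The side conditions on grade vectors in a typing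
rule are literally those of the evaluation rule for the same construct, so they carry over
unchanged; a closure may capture the current grade vector because `≤co` is reflexive.
-/

section

variable {Q : Type} {S : CoSig Q} {γ γ₁ γ₂ : List Q} {Γ : List (VTy Q)} {ρ : List (CloVal Q)}
  {q q₁ q₂ : Q} {x : Nat} {V V₁ V₂ : Val Q} {M M₁ M₂ N : Comp Q} {W : CloVal Q} {T : Terminal Q}
  {A A₁ A₂ : VTy Q} {B B₁ B₂ : CTy Q}

theorem vle_refl (S : CoSig Q) (γ : List Q) : vle S γ γ :=
  List.forall₂_same.2 fun q _ => S.le_refl q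

theorem wRel_unit_iff : WRel S .unit W ↔ W = .unit := by
  rw [WRel]

theorem wRel_thunk_iff :
    WRel S (.thunk B) W ↔ ∃ γ ρ M, W = .clo γ ρ M ∧ MRel S B γ ρ M := by
  rw [WRel]; rfl

theorem wRel_prod_iff :
    WRel S (.prod A₁ A₂) W ↔ ∃ W₁ W₂, W = .pair W₁ W₂ ∧ WRel S A₁ W₁ ∧ WRel S A₂ W₂ := by
  rw [WRel]

theorem tRel_F_iff : TRel S (.F q A) T ↔ ∃ W, T = .ret q W ∧ WRel S A W := by
  rw [TRel]

theorem tRel_arr_iff :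
    TRel S (.arr A q B) T ↔
      ∃ γ ρ M, T = .lamClo γ ρ q M ∧ ∀ W, WRel S A W → MRel S B (q :: γ) (W :: ρ) M := by
  rw [TRel]; rfl

theorem tRel_wth_iff :
    TRel S (.wth B₁ B₂) T ↔
      ∃ γ ρ M₁ M₂, T = .cpairClo γ ρ M₁ M₂ ∧ MRel S B₁ γ ρ M₁ ∧ MRel S B₂ γ ρ M₂ := by
  rw [TRel]; rfl

theorem EnvOk.cons (hρ : EnvOk S Γ ρ) (hW : WRel S A W) : EnvOk S (A :: Γ) (W :: ρ) := by
  refine ⟨congrArg Nat.succ hρ.1, fun x A' hx => ?_⟩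
  cases x with
  | zero =>
    obtain rfl : A = A' := Option.some.inj hx
    exact ⟨W, rfl, hW⟩
  | succ x => exact hρ.2 x A' hx

theorem VSem.var (hlen : γ.length = Γ.length) (hA : Γ[x]? = some A) (hq : γ[x]? = some q)
    (hone : S.le q S.one)
    (hzero : ∀ (i : Nat) (q' : Q), i ≠ x → γ[i]? = some q' → S.le q' S.zero) :
    VSem S γ Γ (.var x) A := by
  intro ρ hρ
  obtain ⟨W, hW, hAW⟩ := hρ.2 x A hA
  exact ⟨W, .var (hlen.trans hρ.1) hW hq hone hzero, hAW⟩

theorem VSem.unit (hlen : γ.length = Γ.length) (hzero : leZero S γ) : VSem S γ Γ .unit .unit :=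
  fun _ hρ => ⟨.unit, .unit (hlen.trans hρ.1) hzero, wRel_unit_iff.2 rfl⟩

theorem VSem.thunk (hM : CSem S γ Γ M B) : VSem S γ Γ (.thunk M) (.thunk B) :=
  fun ρ hρ => ⟨.clo γ ρ M, .thunk (vle_refl S γ), wRel_thunk_iff.2 ⟨γ, ρ, M, rfl, hM ρ hρ⟩⟩

theorem VSem.pair (hV₁ : VSem S γ₁ Γ V₁ A₁) (hV₂ : VSem S γ₂ Γ V₂ A₂)
    (hγ : vle S γ (vadd S γ₁ γ₂)) : VSem S γ Γ (.pair V₁ V₂) (.prod A₁ A₂) := by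
  intro ρ hρ
  obtain ⟨W₁, hVW₁, hW₁⟩ := hV₁ ρ hρ
  obtain ⟨W₂, hVW₂, hW₂⟩ := hV₂ ρ hρ
  exact ⟨.pair W₁ W₂, .pair hVW₁ hVW₂ hγ, wRel_prod_iff.2 ⟨W₁, W₂, rfl, hW₁, hW₂⟩⟩

theorem CSem.lam (hM : CSem S (q :: γ) (A :: Γ) M B) : CSem S γ Γ (.lam q M) (.arr A q B) :=
  fun ρ hρ => ⟨.lamClo γ ρ q M, .lam (vle_refl S γ),
    tRel_arr_iff.2 ⟨γ, ρ, M, rfl, fun W hW => hM (W :: ρ) (hρ.cons hW)⟩⟩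

theorem CSem.app (hM : CSem S γ₁ Γ M (.arr A q B)) (hV : VSem S γ₂ Γ V A)
    (hγ : vle S γ (vadd S γ₁ (vscale S q γ₂))) : CSem S γ Γ (.app M V) B := by
  intro ρ hρ
  obtain ⟨_, hMclo, hclo⟩ := hM ρ hρ
  obtain ⟨W, hVW, hW⟩ := hV ρ hρ
  obtain ⟨γ', ρ', M', rfl, hbody⟩ := tRel_arr_iff.1 hclo
  obtain ⟨T, hM'T, hT⟩ := hbody W hW
  exact ⟨T, .app hMclo hVW hM'T hγ, hT⟩

theorem CSem.force (hV : VSem S γ Γ V (.thunk B)) : CSem S γ Γ (.force V) B := by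
  intro ρ hρ
  obtain ⟨_, hVclo, hclo⟩ := hV ρ hρ
  obtain ⟨γ', ρ', M, rfl, T, hMT, hT⟩ := wRel_thunk_iff.1 hclo
  exact ⟨T, .force hVclo hMT, hT⟩

theorem CSem.ret (hV : VSem S γ₁ Γ V A) (hγ : vle S γ (vscale S q γ₁)) :
    CSem S γ Γ (.ret q V) (.F q A) := by
  intro ρ hρ
  obtain ⟨W, hVW, hW⟩ := hV ρ hρ
  exact ⟨.ret q W, .ret hVW hγ, tRel_F_iff.2 ⟨W, rfl, hW⟩⟩

theorem CSem.letin (hM : CSem S γ₁ Γ M (.F q₁ A))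
    (hN : CSem S (S.mul q₁ q₂ :: γ₂) (A :: Γ) N B)
    (hγ : vle S γ (vadd S (vscale S q₂ γ₁) γ₂)) : CSem S γ Γ (.letin q₂ M N) B := by
  intro ρ hρ
  obtain ⟨_, hMret, hret⟩ := hM ρ hρ
  obtain ⟨W, rfl, hW⟩ := tRel_F_iff.1 hret
  obtain ⟨T, hNT, hT⟩ := hN (W :: ρ) (hρ.cons hW)
  exact ⟨T, .letin hMret hNT hγ, hT⟩

theorem CSem.split (hV : VSem S γ₁ Γ V (.prod A₁ A₂))
    (hN : CSem S (q :: q :: γ₂) (A₂ :: A₁ :: Γ) N B)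
    (hγ : vle S γ (vadd S (vscale S q γ₁) γ₂)) : CSem S γ Γ (.split q V N) B := by
  intro ρ hρ
  obtain ⟨_, hVpair, hpair⟩ := hV ρ hρ
  obtain ⟨W₁, W₂, rfl, hW₁, hW₂⟩ := wRel_prod_iff.1 hpair
  obtain ⟨T, hNT, hT⟩ := hN (W₂ :: W₁ :: ρ) ((hρ.cons hW₁).cons hW₂)
  exact ⟨T, .split hVpair hNT hγ, hT⟩

theorem CSem.cpair (hM₁ : CSem S γ Γ M₁ B₁) (hM₂ : CSem S γ Γ M₂ B₂) :
    CSem S γ Γ (.cpair M₁ M₂) (.wth B₁ B₂) :=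
  fun ρ hρ => ⟨.cpairClo γ ρ M₁ M₂, .cpair (vle_refl S γ),
    tRel_wth_iff.2 ⟨γ, ρ, M₁, M₂, rfl, hM₁ ρ hρ, hM₂ ρ hρ⟩⟩

theorem CSem.fst (hM : CSem S γ Γ M (.wth B₁ B₂)) : CSem S γ Γ (.fst M) B₁ := by
  intro ρ hρ
  obtain ⟨_, hMclo, hclo⟩ := hM ρ hρ
  obtain ⟨γ', ρ', M₁, M₂, rfl, ⟨T, hM₁T, hT⟩, -⟩ := tRel_wth_iff.1 hclo
  exact ⟨T, .fst hMclo hM₁T, hT⟩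

theorem CSem.snd (hM : CSem S γ Γ M (.wth B₁ B₂)) : CSem S γ Γ (.snd M) B₂ := by
  intro ρ hρ
  obtain ⟨_, hMclo, hclo⟩ := hM ρ hρ
  obtain ⟨γ', ρ', M₁, M₂, rfl, -, T, hM₂T, hT⟩ := tRel_wth_iff.1 hclo
  exact ⟨T, .snd hMclo hM₂T, hT⟩

end

mutual

theorem VHasTy.vSem {Q : Type} {S : CoSig Q} {γ : List Q} {Γ : List (VTy Q)} {V : Val Q}
    {A : VTy Q} : VHasTy S γ Γ V A → VSem S γ Γ V A
  | .var hlen hA hq hone hzero => .var hlen hA hq hone hzero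
  | .unit hlen hzero => .unit hlen hzero
  | .thunk hM => .thunk hM.cSem
  | .pair hV₁ hV₂ hγ => .pair hV₁.vSem hV₂.vSem hγ

theorem CHasTy.cSem {Q : Type} {S : CoSig Q} {γ : List Q} {Γ : List (VTy Q)} {M : Comp Q}
    {B : CTy Q} : CHasTy S γ Γ M B → CSem S γ Γ M B
  | .lam hM => .lam hM.cSem
  | .app hM hV hγ => .app hM.cSem hV.vSem hγ
  | .force hV => .force hV.vSem
  | .ret hV hγ => .ret hV.vSem hγ
  | .letin hM hN hγ => .letin hM.cSem hN.cSem hγ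
  | .split hV hN hγ => .split hV.vSem hN.cSem hγ
  | .cpair hM₁ hM₂ => .cpair hM₁.cSem hM₂.cSem
  | .fst hM => .fst hM.cSem
  | .snd hM => .snd hM.cSem

end

/-- Coeffect soundness for CBPV: given an environment providing closed values of
the expected types for all variables of `Γ`, every well-typed value evaluates to
some closed value, and every well-typed computation evaluates to some closed
terminal computation. -/
theorem coeffect_soundness {Q : Type} (S : CoSig Q) {Γ : List (VTy Q)}
    {ρ : List (CloVal Q)} (hρ : EnvOk S Γ ρ) :
    (∀ {γ : List Q} {V : Val Q} {A : VTy Q}, VHasTy S γ Γ V A →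
      ∃ (W : CloVal Q), EvalVal S γ ρ V W) ∧
    (∀ {γ : List Q} {M : Comp Q} {B : CTy Q}, CHasTy S γ Γ M B →
      ∃ (T : Terminal Q), EvalComp S γ ρ M T) := by
  constructor
  · intro γ V A hV
    obtain ⟨W, hVW, -⟩ := hV.vSem ρ hρ
    exact ⟨W, hVW⟩
  · intro γ M B hM
    obtain ⟨T, hMT, -⟩ := hM.cSem ρ hρ
    exact ⟨T, hMT⟩

end CBPVCo
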